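/- Let K be a flow kernel, let the LQ coefficients be given, and fix ξ ∈ ℝ^d and m, M ∈ C([0,T]; ℝ^d). Then the deterministic forward–backward Volterra system has exactly one pair of continuous solutions (x, y) on [0,T]. -/

import Mathlib

open MeasureTheory Matrix Set Filter

noncomputable section

abbrev Mat (d : ℕ) := Matrix (Fin d) (Fin d) ℝ
abbrev Vec (d : ℕ) := Fin d → ℝ

/-- A flow kernel on `[0,T]`. -/
structure IsFlowKernel (T : ℝ) (d : ℕ) (K : ℝ → ℝ → Mat d) : Prop where
  diag : ∀ t ∈ Icc (0:ℝ) T, K t t = 1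
  flow : ∀ s ∈ Icc (0:ℝ) T, ∀ u ∈ Icc (0:ℝ) T, ∀ t ∈ Icc (0:ℝ) T, K t s = K t u * K u s
  cont : ContinuousOn (fun t => K t 0) (Icc (0:ℝ) T)

/-- `X` is a continuous solution on `[0,T]` of the controlled forward Volterra state equation
`X t = K t 0 ξ + M t + ∫₀ᵗ K t s (A s X s + B s α s + C s m s) ds`. -/
def SolvesState (T : ℝ) {d κ : ℕ} (K : ℝ → ℝ → Mat d) (A C : ℝ → Mat d)
    (B : ℝ → Matrix (Fin d) (Fin κ) ℝ) (ξ : Vec d) (m M : ℝ → Vec d)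
    (α : ℝ → Vec κ) (X : ℝ → Vec d) : Prop :=
  ContinuousOn X (Icc (0:ℝ) T) ∧
  ∀ t ∈ Icc (0:ℝ) T,
    X t = K t 0 *ᵥ ξ + M t
      + ∫ s in (0:ℝ)..t, K t s *ᵥ (A s *ᵥ X s + B s *ᵥ α s + C s *ᵥ m s)

/-- `(x, y)` is a pair of continuous solutions on `[0,T]` of the deterministic
forward–backward Volterra system. -/
def SolvesFB (T : ℝ) {d κ : ℕ} (K : ℝ → ℝ → Mat d) (A C : ℝ → Mat d)
    (B : ℝ → Matrix (Fin d) (Fin κ) ℝ) (R : ℝ → Matrix (Fin κ) (Fin κ) ℝ)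
    (Qt Qbt St : ℝ → Mat d) (Q Qb S : Mat d) (ξ : Vec d) (m M : ℝ → Vec d)
    (x y : ℝ → Vec d) : Prop :=
  ContinuousOn x (Icc (0:ℝ) T) ∧ ContinuousOn y (Icc (0:ℝ) T) ∧
  (∀ t ∈ Icc (0:ℝ) T,
    x t = K t 0 *ᵥ ξ + M t
      + ∫ s in (0:ℝ)..t,
          K t s *ᵥ (A s *ᵥ x s - B s *ᵥ ((R s)⁻¹ *ᵥ ((B s)ᵀ *ᵥ y s)) + C s *ᵥ m s)) ∧
  (∀ t ∈ Icc (0:ℝ) T,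
    y t = (K T t)ᵀ *ᵥ ((Q + Qb) *ᵥ x T - Qb *ᵥ (S *ᵥ m T))
      + ∫ s in t..T,
          (K s t)ᵀ *ᵥ ((Qt s + Qbt s) *ᵥ x s - Qbt s *ᵥ (St s *ᵥ m s) + (A s)ᵀ *ᵥ y s))

/-!
Since `K t s = K t 0 * (K s 0)⁻¹`, the coordinates `u t = (K t 0)⁻¹ (x t - M t)` and
`v t = (K t 0)ᵀ y t` turn the system into a linear Hamiltonian boundary value problem
`u' = A u - G v + c`, `v' = -H u - Aᵀ v + h`, `u 0 = ξ`, `v T = P u T + p`, where `G`, `H` and `P`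
are congruent to `B R⁻¹ Bᵀ`, `Q_t + Q̄_t` and `Q + Q̄`, hence positive semidefinite.

For the homogeneous problem `(u ⬝ v)' = -(v ⬝ G v + u ⬝ H u) ≤ 0`, while `u ⬝ v` vanishes at `0` and
equals `u ⬝ P u ≥ 0` at `T`. So the derivative vanishes identically and `G v = 0`; then `u' = A u`
with `u 0 = 0` gives `u = 0`, and `v' = -Aᵀ v` with `v T = 0` gives `v = 0`. There are as many
boundary conditions as unknowns, so this uniqueness makes the shooting map bijective and every
inhomogeneous problem uniquely solvable.
-/

open Function
open scoped NNReal Topology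

section ODE

variable {E : Type*} [NormedAddCommGroup E] [NormedSpace ℝ E] {a b : ℝ} {v : ℝ → E → E} {L : ℝ≥0}

theorem eqOn_Icc_of_hasDerivWithinAt_of_lipschitzWith (hL : ∀ t ∈ Icc a b, LipschitzWith L (v t))
    {f g : ℝ → E} (hf : ∀ t ∈ Icc a b, HasDerivWithinAt f (v t (f t)) (Icc a b) t)
    (hg : ∀ t ∈ Icc a b, HasDerivWithinAt g (v t (g t)) (Icc a b) t)
    {t₀ : ℝ} (ht₀ : t₀ ∈ Icc a b) (h₀ : f t₀ = g t₀) : EqOn f g (Icc a b) := by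
  have hfc : ContinuousOn f (Icc a b) := HasDerivWithinAt.continuousOn hf
  have hgc : ContinuousOn g (Icc a b) := HasDerivWithinAt.continuousOn hg
  have hleft : Icc a t₀ ⊆ Icc a b := Icc_subset_Icc_right ht₀.2
  have hright : Icc t₀ b ⊆ Icc a b := Icc_subset_Icc_left ht₀.1
  have hIoc : ∀ t ∈ Ioc a t₀, t ∈ Ioc a b := fun t ht => ⟨ht.1, ht.2.trans ht₀.2⟩
  have hIco : ∀ t ∈ Ico t₀ b, t ∈ Ico a b := fun t ht => ⟨ht₀.1.trans ht.1, ht.2⟩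
  have hIic : ∀ t ∈ Ioc a b, Icc a b ∈ 𝓝[≤] t := fun t ht => Icc_mem_nhdsLE_of_mem ht
  have hIci : ∀ t ∈ Ico a b, Icc a b ∈ 𝓝[≥] t := fun t ht => Icc_mem_nhdsGE_of_mem ht
  rw [← Icc_union_Icc_eq_Icc ht₀.1 ht₀.2]
  refine EqOn.union ?_ ?_
  · exact ODE_solution_unique_of_mem_Icc_left (s := fun _ => univ)
      (fun t ht => (hL t (hleft (Ioc_subset_Icc_self ht))).lipschitzOnWith)
      (hfc.mono hleft)
      (fun t ht => (hf t (hleft (Ioc_subset_Icc_self ht))).mono_of_mem_nhdsWithin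
        (hIic t (hIoc t ht)))
      (fun _ _ => mem_univ _) (hgc.mono hleft)
      (fun t ht => (hg t (hleft (Ioc_subset_Icc_self ht))).mono_of_mem_nhdsWithin
        (hIic t (hIoc t ht)))
      (fun _ _ => mem_univ _) h₀
  · exact ODE_solution_unique_of_mem_Icc_right (s := fun _ => univ)
      (fun t ht => (hL t (hright (Ico_subset_Icc_self ht))).lipschitzOnWith)
      (hfc.mono hright)
      (fun t ht => (hf t (hright (Ico_subset_Icc_self ht))).mono_of_mem_nhdsWithin
        (hIci t (hIco t ht)))
      (fun _ _ => mem_univ _) (hgc.mono hright)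
      (fun t ht => (hg t (hright (Ico_subset_Icc_self ht))).mono_of_mem_nhdsWithin
        (hIci t (hIco t ht)))
      (fun _ _ => mem_univ _) h₀

variable [CompleteSpace E]

theorem forall_eq_add_integral_iff {f z : ℝ → E} (hf : ContinuousOn f (Icc a b)) {t₀ : ℝ}
    (ht₀ : t₀ ∈ Icc a b) (c : E) :
    (∀ t ∈ Icc a b, z t = c + ∫ s in t₀..t, f s) ↔
      z t₀ = c ∧ ∀ t ∈ Icc a b, HasDerivWithinAt z (f t) (Icc a b) t := by
  have hf' : ContinuousOn (uncurry fun t (_ : E) => f t) (Icc a b ×ˢ univ) :=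
    hf.comp continuousOn_fst fun _ hp => hp.1
  constructor
  · intro h
    have hderiv : ∀ t ∈ Icc a b,
        HasDerivWithinAt (ODE.picard (fun t _ => f t) t₀ c f) (f t) (Icc a b) t := fun t ht =>
      ODE.hasDerivWithinAt_picard_Icc ht₀ hf' hf (fun _ _ => mem_univ _) c ht
    exact ⟨by simpa using h t₀ ht₀, fun t ht => (hderiv t ht).congr h (h t ht)⟩
  · rintro ⟨rfl, h⟩ t ht
    have hsub : uIcc t₀ t ⊆ Icc a b := uIcc_subset_Icc ht₀ ht
    exact (ODE.picard_eq_of_hasDerivAt (hf'.mono (prod_mono_left hsub))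
      (fun s hs => (h s (hsub hs)).mono hsub) (mapsTo_univ _ _)).symm

/-- The Picard operator `α ↦ z₀ + ∫ₐᵗ v s (α s) ds` on continuous curves over `[a, b]`, whose fixed
points are the solutions of `z' = v t z`, `z a = z₀`. -/
def picardOperator (hab : a ≤ b) (hv : ContinuousOn (uncurry v) (Icc a b ×ˢ univ)) (z₀ : E)
    (α : C(Icc a b, E)) : C(Icc a b, E) where
  toFun t := ODE.picard v a z₀ (IccExtend hab α) t
  continuous_toFun := continuousOn_iff_continuous_domRestrict.1 <|
    HasDerivWithinAt.continuousOn fun _ ht =>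
      ODE.hasDerivWithinAt_picard_Icc (left_mem_Icc.2 hab) hv α.continuous.Icc_extend'.continuousOn
        (fun _ _ => mem_univ _) z₀ ht

theorem integral_sub_pow_left (a t : ℝ) (n : ℕ) :
    ∫ s in a..t, (s - a) ^ n = (t - a) ^ (n + 1) / (n + 1) := by
  simp [intervalIntegral.integral_comp_sub_right fun s => s ^ n]

theorem dist_iterate_picardOperator_apply_le (hab : a ≤ b)
    (hv : ContinuousOn (uncurry v) (Icc a b ×ˢ univ)) (hL : ∀ t ∈ Icc a b, LipschitzWith L (v t))
    (z₀ : E) (α β : C(Icc a b, E)) (n : ℕ) (t : Icc a b) :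
    dist ((picardOperator hab hv z₀)^[n] α t) ((picardOperator hab hv z₀)^[n] β t) ≤
      (L * (t - a)) ^ n / n.factorial * dist α β := by
  induction n generalizing t with
  | zero => simpa using ContinuousMap.dist_apply_le_dist t
  | succ n ih =>
    have hint : ∀ γ : C(Icc a b, E),
        IntervalIntegrable (fun s => v s (IccExtend hab γ s)) volume a t := fun γ =>
      ((ODE.continuousOn_comp hv γ.continuous.Icc_extend'.continuousOn (mapsTo_univ _ _)).mono
        (uIcc_subset_Icc (left_mem_Icc.2 hab) t.2)).intervalIntegrable
    rw [Function.iterate_succ_apply', Function.iterate_succ_apply']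
    set γ := (picardOperator hab hv z₀)^[n] α
    set δ := (picardOperator hab hv z₀)^[n] β
    calc dist (picardOperator hab hv z₀ γ t) (picardOperator hab hv z₀ δ t)
        = ‖∫ s in a..t, (v s (IccExtend hab γ s) - v s (IccExtend hab δ s))‖ := by
          rw [intervalIntegral.integral_sub (hint γ) (hint δ), ← dist_eq_norm]
          exact dist_add_left _ _ _
      _ ≤ ∫ s in a..t, L * ((L * (s - a)) ^ n / n.factorial * dist α β) := by
          refine intervalIntegral.norm_integral_le_of_norm_le t.2.1 (.of_forall fun s hs => ?_)
            (Continuous.intervalIntegrable (by fun_prop) _ _)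
          have hs' : s ∈ Icc a b := ⟨hs.1.le, hs.2.trans t.2.2⟩
          rw [← dist_eq_norm, IccExtend_of_mem _ _ hs', IccExtend_of_mem _ _ hs']
          exact (hL s hs').dist_le_mul_of_le (ih ⟨s, hs'⟩)
      _ = (L * (t - a)) ^ (n + 1) / (n + 1).factorial * dist α β := by
          simp only [mul_pow, intervalIntegral.integral_const_mul, intervalIntegral.integral_div,
            intervalIntegral.integral_mul_const, integral_sub_pow_left, Nat.factorial_succ]
          push_cast
          field_simp
          ring

theorem exists_contractingWith_iterate_picardOperator (hab : a ≤ b)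
    (hv : ContinuousOn (uncurry v) (Icc a b ×ˢ univ)) (hL : ∀ t ∈ Icc a b, LipschitzWith L (v t))
    (z₀ : E) : ∃ (n : ℕ) (C : ℝ≥0), ContractingWith C (picardOperator hab hv z₀)^[n] := by
  obtain ⟨n, hn⟩ := ((FloorSemiring.tendsto_pow_div_factorial_atTop (L * (b - a))).eventually
    (gt_mem_nhds zero_lt_one)).exists
  have : 0 ≤ b - a := sub_nonneg.2 hab
  let C : ℝ≥0 := ⟨(L * (b - a)) ^ n / n.factorial, by positivity⟩
  refine ⟨n, C, hn, LipschitzWith.of_dist_le_mul fun α β => ?_⟩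
  refine (ContinuousMap.dist_le (by positivity)).2 fun t => ?_
  calc dist ((picardOperator hab hv z₀)^[n] α t) ((picardOperator hab hv z₀)^[n] β t)
      ≤ (L * (t - a)) ^ n / n.factorial * dist α β :=
        dist_iterate_picardOperator_apply_le hab hv hL z₀ α β n t
    _ ≤ (L * (b - a)) ^ n / n.factorial * dist α β := by
        have := sub_nonneg.2 t.2.1
        gcongr
        exact t.2.2

theorem exists_hasDerivWithinAt_of_lipschitzWith (hab : a ≤ b)
    (hv : ContinuousOn (uncurry v) (Icc a b ×ˢ univ)) (hL : ∀ t ∈ Icc a b, LipschitzWith L (v t))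
    (z₀ : E) :
    ∃ z : ℝ → E, z a = z₀ ∧ ∀ t ∈ Icc a b, HasDerivWithinAt z (v t (z t)) (Icc a b) t := by
  obtain ⟨n, C, hC⟩ := exists_contractingWith_iterate_picardOperator hab hv hL z₀
  let α := hC.fixedPoint (picardOperator hab hv z₀)^[n]
  have hα : picardOperator hab hv z₀ α = α := hC.isFixedPt_fixedPoint_iterate
  have hα' : ∀ t ∈ Icc a b,
      IccExtend hab α t = z₀ + ∫ s in a..t, v s (IccExtend hab α s) := fun t ht => by
    rw [IccExtend_of_mem _ _ ht]
    exact (DFunLike.congr_fun hα ⟨t, ht⟩).symm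
  exact ⟨IccExtend hab α, (forall_eq_add_integral_iff (ODE.continuousOn_comp hv
    α.continuous.Icc_extend'.continuousOn (mapsTo_univ _ _)) (left_mem_Icc.2 hab) z₀).1 hα'⟩

end ODE

section LinearBVP

variable {E F : Type*} [NormedAddCommGroup E] [NormedSpace ℝ E] [AddCommGroup F] [Module ℝ F]
  {a b : ℝ} {A : ℝ → E →L[ℝ] E} {f : ℝ → E}

theorem exists_forall_lipschitzWith_clm_add (hA : ContinuousOn A (Icc a b)) (f : ℝ → E) :
    ∃ L : ℝ≥0, ∀ t ∈ Icc a b, LipschitzWith L fun z => A t z + f t := by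
  obtain ⟨L, hL⟩ := isCompact_Icc.exists_bound_of_continuousOn hA
  refine ⟨L.toNNReal, fun t ht => LipschitzWith.of_dist_le_mul fun z w => ?_⟩
  rw [dist_add_right, dist_eq_norm, dist_eq_norm, ← map_sub]
  exact (A t).le_of_opNorm_le ((hL t ht).trans (Real.le_coe_toNNReal L)) _

theorem exists_hasDerivWithinAt_clm_add [CompleteSpace E] (hab : a ≤ b)
    (hA : ContinuousOn A (Icc a b)) (hf : ContinuousOn f (Icc a b)) (z₀ : E) :
    ∃ z : ℝ → E, z a = z₀ ∧ ∀ t ∈ Icc a b, HasDerivWithinAt z (A t (z t) + f t) (Icc a b) t := by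
  obtain ⟨L, hL⟩ := exists_forall_lipschitzWith_clm_add hA f
  have hfst : MapsTo Prod.fst (Icc a b ×ˢ (univ : Set E)) (Icc a b) := fun _ hp => hp.1
  exact exists_hasDerivWithinAt_of_lipschitzWith (v := fun t z => A t z + f t) hab
    (((hA.comp continuousOn_fst hfst).clm_apply continuousOn_snd).add
      (hf.comp continuousOn_fst hfst)) hL z₀

theorem eqOn_zero_of_hasDerivWithinAt_clm (hA : ContinuousOn A (Icc a b)) {z : ℝ → E}
    (hz : ∀ t ∈ Icc a b, HasDerivWithinAt z (A t (z t)) (Icc a b) t)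
    {t₀ : ℝ} (ht₀ : t₀ ∈ Icc a b) (hz₀ : z t₀ = 0) : EqOn z 0 (Icc a b) := by
  obtain ⟨L, hL⟩ := exists_forall_lipschitzWith_clm_add hA 0
  refine eqOn_Icc_of_hasDerivWithinAt_of_lipschitzWith hL (fun t ht => ?_) (fun t _ => ?_) ht₀ hz₀
  · simpa using hz t ht
  · simpa using! hasDerivWithinAt_const t (Icc a b) (0 : E)

/-- `z` solves on `[a, b]` the linear boundary value problem `z' = A t z + f t`,
`β (z a, z b) = γ`. -/
structure SolvesLinearBVP (a b : ℝ) (A : ℝ → E →L[ℝ] E) (f : ℝ → E) (β : E × E →ₗ[ℝ] F) (γ : F)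
    (z : ℝ → E) : Prop where
  deriv : ∀ t ∈ Icc a b, HasDerivWithinAt z (A t (z t) + f t) (Icc a b) t
  boundary : β (z a, z b) = γ

namespace SolvesLinearBVP

variable {β : E × E →ₗ[ℝ] F} {γ δ : F} {g z w : ℝ → E}

theorem sub (hz : SolvesLinearBVP a b A f β γ z) (hw : SolvesLinearBVP a b A g β δ w) :
    SolvesLinearBVP a b A (f - g) β (γ - δ) (z - w) where
  deriv t ht := ((hz.deriv t ht).sub (hw.deriv t ht)).congr_deriv <| by
    simp only [Pi.sub_apply, map_sub]
    abel
  boundary := by rw [← hz.boundary, ← hw.boundary, ← map_sub]; rfl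

theorem congr (hab : a ≤ b) (hz : SolvesLinearBVP a b A f β γ z) (hwz : EqOn w z (Icc a b)) :
    SolvesLinearBVP a b A f β γ w where
  deriv t ht := by
    rw [hwz ht]
    exact (hz.deriv t ht).congr hwz (hwz ht)
  boundary := by rw [hwz (left_mem_Icc.2 hab), hwz (right_mem_Icc.2 hab), hz.boundary]

theorem eqOn (hhom : ∀ z, SolvesLinearBVP a b A 0 β 0 z → EqOn z 0 (Icc a b))
    (hz : SolvesLinearBVP a b A f β γ z) (hw : SolvesLinearBVP a b A f β γ w) :
    EqOn z w (Icc a b) := fun _ ht =>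
  sub_eq_zero.1 (hhom _ (by simpa only [sub_self] using hz.sub hw) ht)

end SolvesLinearBVP

/-- Fredholm alternative, by shooting: the fundamental matrix `U` turns the homogeneous problem into
the linear equation `β (η, U b η) = 0` for the initial value `η`. -/
theorem exists_solvesLinearBVP [FiniteDimensional ℝ E] [FiniteDimensional ℝ F] (hab : a ≤ b)
    (hdim : Module.finrank ℝ E = Module.finrank ℝ F) (hA : ContinuousOn A (Icc a b))
    {β : E × E →ₗ[ℝ] F} (hhom : ∀ z, SolvesLinearBVP a b A 0 β 0 z → EqOn z 0 (Icc a b))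
    (hf : ContinuousOn f (Icc a b)) (γ : F) : ∃ z, SolvesLinearBVP a b A f β γ z := by
  have := FiniteDimensional.complete ℝ E
  obtain ⟨U, hUa, hU⟩ := exists_hasDerivWithinAt_clm_add (f := 0) hab
    ((ContinuousLinearMap.compL ℝ E E E).continuous.comp_continuousOn hA) continuousOn_const
    (ContinuousLinearMap.id ℝ E)
  obtain ⟨w, -, hw⟩ := exists_hasDerivWithinAt_clm_add hab hA hf 0
  let shoot : E →ₗ[ℝ] F := β ∘ₗ LinearMap.prod LinearMap.id (U b : E →ₗ[ℝ] E)
  have hshoot : ∀ η, SolvesLinearBVP a b A 0 β (shoot η) fun t => U t η := fun η =>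
    ⟨fun t ht => by simpa using (hU t ht).clm_apply (hasDerivWithinAt_const t _ η),
      by simp [shoot, hUa]⟩
  have hinj : Function.Injective shoot := by
    refine (injective_iff_map_eq_zero shoot).2 fun η hη => ?_
    have hUη : U a η = 0 := hhom _ (hη ▸ hshoot η) (left_mem_Icc.2 hab)
    rwa [hUa] at hUη
  obtain ⟨η, hη⟩ := (LinearMap.injective_iff_surjective_of_finrank_eq_finrank hdim).1 hinj
    (β (w a, w b) - γ)
  have hsub := (SolvesLinearBVP.mk (β := β) hw rfl).sub (hshoot η)
  rw [hη, sub_zero, sub_sub_cancel] at hsub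
  exact ⟨_, hsub⟩

end LinearBVP

section Calculus

variable {𝕜 : Type*} [NontriviallyNormedField 𝕜] {s : Set 𝕜} {t : 𝕜}

theorem hasDerivWithinAt_prod_iff {E F : Type*} [NormedAddCommGroup E] [NormedSpace 𝕜 E]
    [NormedAddCommGroup F] [NormedSpace 𝕜 F] {z : 𝕜 → E × F} {z' : E × F} :
    HasDerivWithinAt z z' s t ↔
      HasDerivWithinAt (fun r => (z r).1) z'.1 s t ∧ HasDerivWithinAt (fun r => (z r).2) z'.2 s t :=
  ⟨fun h => ⟨(ContinuousLinearMap.fst 𝕜 E F).hasFDerivAt.comp_hasDerivWithinAt t h,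
    (ContinuousLinearMap.snd 𝕜 E F).hasFDerivAt.comp_hasDerivWithinAt t h⟩,
    fun h => h.1.prodMk h.2⟩

theorem hasDerivWithinAt_dotProduct {n : Type*} [Fintype n] {u v : 𝕜 → n → 𝕜} {u' v' : n → 𝕜}
    (hu : HasDerivWithinAt u u' s t) (hv : HasDerivWithinAt v v' s t) :
    HasDerivWithinAt (fun r => u r ⬝ᵥ v r) (u' ⬝ᵥ v t + u t ⬝ᵥ v') s t := by
  simp only [dotProduct, ← Finset.sum_add_distrib]
  exact HasDerivWithinAt.fun_sum fun i _ =>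
    (hasDerivWithinAt_pi.1 hu i).mul (hasDerivWithinAt_pi.1 hv i)

theorem eqOn_zero_of_hasDerivWithinAt_nonpos_of_le {f f' : ℝ → ℝ} {a b : ℝ} (hab : a < b)
    (hf : ∀ t ∈ Icc a b, HasDerivWithinAt f (f' t) (Icc a b) t) (hf' : ∀ t ∈ Icc a b, f' t ≤ 0)
    (hle : f a ≤ f b) : EqOn f' 0 (Icc a b) := by
  have hanti : AntitoneOn f (Icc a b) :=
    antitoneOn_of_hasDerivWithinAt_nonpos (convex_Icc a b) (HasDerivWithinAt.continuousOn hf)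
      (fun t ht => (hf t (interior_subset ht)).mono interior_subset)
      fun t ht => hf' t (interior_subset ht)
  have hconst : ∀ t ∈ Icc a b, f t = f a := fun t ht =>
    le_antisymm (hanti (left_mem_Icc.2 hab.le) ht ht.1)
      (hle.trans (hanti ht (right_mem_Icc.2 hab.le) ht.2))
  exact fun t ht => (uniqueDiffOn_Icc hab t ht).eq_deriv _ (hf t ht)
    ((hasDerivWithinAt_const t _ (f a)).congr hconst (hconst t ht))

end Calculus

section MatrixContinuity

variable {X R l m n : Type*} [TopologicalSpace X] [TopologicalSpace R] {s : Set X}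

@[fun_prop]
theorem continuousOn_matrix_transpose {A : X → Matrix m n R} (hA : ContinuousOn A s) :
    ContinuousOn (fun x => (A x)ᵀ) s :=
  continuous_id.matrix_transpose.comp_continuousOn hA

@[fun_prop]
theorem continuousOn_matrix_mul [Fintype m] [Mul R] [AddCommMonoid R] [ContinuousAdd R]
    [ContinuousMul R] {A : X → Matrix l m R} {B : X → Matrix m n R} (hA : ContinuousOn A s)
    (hB : ContinuousOn B s) : ContinuousOn (fun x => A x * B x) s :=
  (continuous_fst.matrix_mul continuous_snd).comp_continuousOn (hA.prodMk hB)

@[fun_prop]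
theorem continuousOn_matrix_mulVec [Fintype n] [NonUnitalNonAssocSemiring R] [ContinuousAdd R]
    [ContinuousMul R] {A : X → Matrix m n R} {v : X → n → R} (hA : ContinuousOn A s)
    (hv : ContinuousOn v s) : ContinuousOn (fun x => A x *ᵥ v x) s :=
  (continuous_fst.matrix_mulVec continuous_snd).comp_continuousOn (hA.prodMk hv)

theorem continuousOn_matrix_inv [Fintype n] [DecidableEq n] [Field R] [IsTopologicalRing R]
    [ContinuousInv₀ R] {A : X → Matrix n n R} (hA : ContinuousOn A s)
    (hunit : ∀ x ∈ s, IsUnit (A x)) : ContinuousOn (fun x => (A x)⁻¹) s := fun x hx =>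
  (continuousAt_matrix_inv (A x) <| by
    rw [Ring.inverse_eq_inv']
    exact continuousAt_inv₀ ((isUnit_iff_isUnit_det _).1 (hunit x hx)).ne_zero
    ).comp_continuousWithinAt (hA x hx)

end MatrixContinuity

section MatrixCLM

variable {m n : Type*} [Fintype n]

/-- Multiplication by a matrix as a continuous linear map. -/
def mulVecCLM (A : Matrix m n ℝ) : (n → ℝ) →L[ℝ] m → ℝ :=
  LinearMap.toContinuousLinearMap A.mulVecLin

@[simp]
theorem mulVecCLM_apply (A : Matrix m n ℝ) (v : n → ℝ) : mulVecCLM A v = A *ᵥ v := rfl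

theorem continuousOn_mulVecCLM [Finite m] {X : Type*} [TopologicalSpace X] {A : X → Matrix m n ℝ}
    {s : Set X} (hA : ContinuousOn A s) : ContinuousOn (fun x => mulVecCLM (A x)) s := by
  have := Fintype.ofFinite m
  exact continuousOn_clm_apply.2 fun _ => continuousOn_matrix_mulVec hA continuousOn_const

theorem integral_mulVec [Fintype m] (A : Matrix m n ℝ) {f : ℝ → n → ℝ} {a b : ℝ}
    (hf : IntervalIntegrable f volume a b) :
    ∫ t in a..b, A *ᵥ f t = A *ᵥ ∫ t in a..b, f t :=
  (mulVecCLM A).intervalIntegral_comp_comm hf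

end MatrixCLM

section MatrixPosSemidef

theorem posSemidef_transpose_mul_mul {m n : Type*} [Finite n] [Fintype m] {S : Matrix m m ℝ}
    (hS : S.PosSemidef) (B : Matrix m n ℝ) : (Bᵀ * S * B).PosSemidef := by
  rw [← conjTranspose_eq_transpose_of_trivial]
  exact hS.conjTranspose_mul_mul_same B

theorem posDef_of_posSemidef_sub_smul_one {n : Type*} [Finite n] [DecidableEq n]
    {S : Matrix n n ℝ} {lam : ℝ} (hlam : 0 < lam) (hS : (S - lam • (1 : Matrix n n ℝ)).PosSemidef) :
    S.PosDef := by
  simpa only [add_sub_cancel] using (PosDef.one.smul hlam).add_posSemidef hS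

end MatrixPosSemidef

section Hamiltonian

variable {n : Type*} [Fintype n]

/-- The generator of the linear Hamiltonian system `u' = A u - G v`, `v' = -H u - Aᵀ v` for a state
`u` and a costate `v`. -/
def hamiltonianCLM (A G H : Matrix n n ℝ) : (n → ℝ) × (n → ℝ) →L[ℝ] (n → ℝ) × (n → ℝ) :=
  (mulVecCLM A ∘L .fst ℝ _ _ - mulVecCLM G ∘L .snd ℝ _ _).prod
    (-(mulVecCLM H ∘L .fst ℝ (n → ℝ) (n → ℝ)) - mulVecCLM Aᵀ ∘L .snd ℝ _ _)

@[simp]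
theorem hamiltonianCLM_apply (A G H : Matrix n n ℝ) (z : (n → ℝ) × (n → ℝ)) :
    hamiltonianCLM A G H z = (A *ᵥ z.1 - G *ᵥ z.2, -(H *ᵥ z.1) - Aᵀ *ᵥ z.2) := rfl

theorem continuousOn_hamiltonianCLM {X : Type*} [TopologicalSpace X] {A G H : X → Matrix n n ℝ}
    {s : Set X} (hA : ContinuousOn A s) (hG : ContinuousOn G s) (hH : ContinuousOn H s) :
    ContinuousOn (fun x => hamiltonianCLM (A x) (G x) (H x)) s :=
  continuousOn_clm_apply.2 fun _ => by
    simp only [hamiltonianCLM_apply]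
    fun_prop

/-- The boundary operator of the Hamiltonian system: initial state and terminal defect
`v - P u`. -/
def hamiltonianBoundary (P : Matrix n n ℝ) :
    ((n → ℝ) × (n → ℝ)) × ((n → ℝ) × (n → ℝ)) →ₗ[ℝ] (n → ℝ) × (n → ℝ) :=
  (.fst ℝ _ _ ∘ₗ .fst ℝ _ _).prod ((.snd ℝ _ _ - P.mulVecLin ∘ₗ .fst ℝ _ _) ∘ₗ .snd ℝ _ _)

@[simp]
theorem hamiltonianBoundary_apply (P : Matrix n n ℝ)
    (z : ((n → ℝ) × (n → ℝ)) × ((n → ℝ) × (n → ℝ))) :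
    hamiltonianBoundary P z = (z.1.1, z.2.2 - P *ᵥ z.2.1) := rfl

theorem hasDerivWithinAt_fst_dotProduct_snd {A G H : Matrix n n ℝ} {z : ℝ → (n → ℝ) × (n → ℝ)}
    {s : Set ℝ} {t : ℝ} (hz : HasDerivWithinAt z (hamiltonianCLM A G H (z t)) s t) :
    HasDerivWithinAt (fun r => (z r).1 ⬝ᵥ (z r).2)
      (-((z t).2 ⬝ᵥ G *ᵥ (z t).2 + (z t).1 ⬝ᵥ H *ᵥ (z t).1)) s t := by
  obtain ⟨hu, hv⟩ := hasDerivWithinAt_prod_iff.1 hz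
  refine (hasDerivWithinAt_dotProduct hu hv).congr_deriv ?_
  simp only [hamiltonianCLM_apply, sub_dotProduct, dotProduct_sub, dotProduct_neg]
  rw [dotProduct_mulVec _ Aᵀ, vecMul_transpose, dotProduct_comm (G *ᵥ _)]
  ring

variable {a b : ℝ} {A G H : ℝ → Matrix n n ℝ} {P : Matrix n n ℝ} {z : ℝ → (n → ℝ) × (n → ℝ)}

theorem mulVec_snd_eq_zero_of_solvesLinearBVP_hamiltonian (hab : a < b)
    (hG : ∀ t ∈ Icc a b, (G t).PosSemidef) (hH : ∀ t ∈ Icc a b, (H t).PosSemidef)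
    (hP : P.PosSemidef)
    (hz : SolvesLinearBVP a b (fun t => hamiltonianCLM (A t) (G t) (H t)) 0
      (hamiltonianBoundary P) 0 z) : ∀ t ∈ Icc a b, G t *ᵥ (z t).2 = 0 := by
  obtain ⟨ha, hb⟩ := Prod.ext_iff.1 hz.boundary
  have hGv : ∀ t ∈ Icc a b, 0 ≤ (z t).2 ⬝ᵥ G t *ᵥ (z t).2 := fun t ht => by
    simpa using (hG t ht).dotProduct_mulVec_nonneg (z t).2
  have hHu : ∀ t ∈ Icc a b, 0 ≤ (z t).1 ⬝ᵥ H t *ᵥ (z t).1 := fun t ht => by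
    simpa using (hH t ht).dotProduct_mulVec_nonneg (z t).1
  have hderiv : ∀ t ∈ Icc a b, HasDerivWithinAt (fun r => (z r).1 ⬝ᵥ (z r).2)
      (-((z t).2 ⬝ᵥ G t *ᵥ (z t).2 + (z t).1 ⬝ᵥ H t *ᵥ (z t).1)) (Icc a b) t := fun t ht =>
    hasDerivWithinAt_fst_dotProduct_snd <| by simpa using hz.deriv t ht
  have hle : (z a).1 ⬝ᵥ (z a).2 ≤ (z b).1 ⬝ᵥ (z b).2 := by
    have ha' : (z a).1 = 0 := ha
    have hb' : (z b).2 = P *ᵥ (z b).1 := sub_eq_zero.1 hb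
    simpa [ha', hb'] using hP.dotProduct_mulVec_nonneg (z b).1
  intro t ht
  have hzero := eqOn_zero_of_hasDerivWithinAt_nonpos_of_le hab hderiv
    (fun t ht => neg_nonpos.2 (add_nonneg (hGv t ht) (hHu t ht))) hle ht
  rw [← (hG t ht).dotProduct_mulVec_zero_iff, star_trivial]
  exact ((add_eq_zero_iff_of_nonneg (hGv t ht) (hHu t ht)).1 (neg_eq_zero.1 hzero)).1

theorem eqOn_zero_of_solvesLinearBVP_hamiltonian (hab : a < b) (hA : ContinuousOn A (Icc a b))
    (hG : ∀ t ∈ Icc a b, (G t).PosSemidef) (hH : ∀ t ∈ Icc a b, (H t).PosSemidef)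
    (hP : P.PosSemidef)
    (hz : SolvesLinearBVP a b (fun t => hamiltonianCLM (A t) (G t) (H t)) 0
      (hamiltonianBoundary P) 0 z) : EqOn z 0 (Icc a b) := by
  have hGv := mulVec_snd_eq_zero_of_solvesLinearBVP_hamiltonian hab hG hH hP hz
  obtain ⟨ha, hb⟩ := Prod.ext_iff.1 hz.boundary
  have hu : ∀ t ∈ Icc a b, (z t).1 = 0 := fun t ht =>
    eqOn_zero_of_hasDerivWithinAt_clm (z := fun t => (z t).1) (continuousOn_mulVecCLM hA)
      (fun t ht => by simpa [hGv t ht] using (hasDerivWithinAt_prod_iff.1 (hz.deriv t ht)).1)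
      (left_mem_Icc.2 hab.le) ha ht
  have hv : ∀ t ∈ Icc a b, (z t).2 = 0 := fun t ht =>
    eqOn_zero_of_hasDerivWithinAt_clm (z := fun t => (z t).2)
      (continuousOn_mulVecCLM (continuousOn_matrix_transpose hA).neg)
      (fun t ht => by
        simpa [hu t ht, neg_mulVec] using (hasDerivWithinAt_prod_iff.1 (hz.deriv t ht)).2)
      (right_mem_Icc.2 hab.le) (by simpa [hu b (right_mem_Icc.2 hab.le)] using hb) ht
  exact fun t ht => Prod.ext (hu t ht) (hv t ht)

end Hamiltonian

namespace IsFlowKernel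

variable {T : ℝ} {d : ℕ} {K : ℝ → ℝ → Mat d} {t : ℝ}

theorem mul_inverse (hK : IsFlowKernel T d K) (ht : t ∈ Icc 0 T) : K t 0 * K 0 t = 1 := by
  rw [← hK.flow t ht 0 (left_mem_Icc.2 (ht.1.trans ht.2)) t ht, hK.diag t ht]

theorem inverse_mul (hK : IsFlowKernel T d K) (ht : t ∈ Icc 0 T) : K 0 t * K t 0 = 1 :=
  mul_eq_one_comm.1 (hK.mul_inverse ht)

theorem mulVec_eq_iff (hK : IsFlowKernel T d K) (ht : t ∈ Icc 0 T) {v w : Vec d} :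
    K 0 t *ᵥ v = w ↔ v = K t 0 *ᵥ w := by
  constructor
  · rintro rfl
    rw [mulVec_mulVec, hK.mul_inverse ht, one_mulVec]
  · rintro rfl
    rw [mulVec_mulVec, hK.inverse_mul ht, one_mulVec]

theorem continuousOn_inverse (hK : IsFlowKernel T d K) : ContinuousOn (fun t => K 0 t) (Icc 0 T) :=
  (continuousOn_matrix_inv hK.cont fun _ ht => .of_mul_eq_one _ (hK.mul_inverse ht)).congr
    fun _ ht => (inv_eq_right_inv (hK.mul_inverse ht)).symm

theorem transpose_swap (hK : IsFlowKernel T d K) : IsFlowKernel T d fun t s => (K s t)ᵀ where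
  diag t ht := by rw [hK.diag t ht, transpose_one]
  flow s hs u hu t ht := by rw [hK.flow t ht u hu s hs, transpose_mul]
  cont := continuousOn_matrix_transpose hK.continuousOn_inverse

theorem integral_mulVec_eq (hK : IsFlowKernel T d K) {g : ℝ → Vec d}
    (hg : ContinuousOn g (Icc 0 T)) {t₀ : ℝ} (ht₀ : t₀ ∈ Icc 0 T) (ht : t ∈ Icc 0 T) :
    ∫ s in t₀..t, K t s *ᵥ g s = K t 0 *ᵥ ∫ s in t₀..t, K 0 s *ᵥ g s := by
  have hsub : uIcc t₀ t ⊆ Icc 0 T := uIcc_subset_Icc ht₀ ht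
  rw [← integral_mulVec _ ((continuousOn_matrix_mulVec hK.continuousOn_inverse hg).mono
    hsub).intervalIntegrable]
  refine intervalIntegral.integral_congr fun s hs => ?_
  simp only [mulVec_mulVec, ← hK.flow s (hsub hs) 0 (left_mem_Icc.2 (ht.1.trans ht.2)) t ht]

/-- The flow property factors `K t s = K t 0 * K 0 s`, so that conjugation by `K 0 t` turns the
Volterra equation into a differential equation. -/
theorem volterra_iff (hK : IsFlowKernel T d K) {g x M : ℝ → Vec d}
    (hg : ContinuousOn g (Icc 0 T)) {t₀ : ℝ} (ht₀ : t₀ ∈ Icc 0 T) (c : Vec d) :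
    (∀ t ∈ Icc 0 T, x t = K t t₀ *ᵥ c + M t + ∫ s in t₀..t, K t s *ᵥ g s) ↔
      K 0 t₀ *ᵥ (x t₀ - M t₀) = K 0 t₀ *ᵥ c ∧
      ∀ t ∈ Icc 0 T,
        HasDerivWithinAt (fun t => K 0 t *ᵥ (x t - M t)) (K 0 t *ᵥ g t) (Icc 0 T) t := by
  have h0 : (0 : ℝ) ∈ Icc 0 T := left_mem_Icc.2 (ht₀.1.trans ht₀.2)
  refine .trans (forall₂_congr fun t ht => ?_) (forall_eq_add_integral_iff
    (z := fun t => K 0 t *ᵥ (x t - M t))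
    (continuousOn_matrix_mulVec hK.continuousOn_inverse hg) ht₀ (K 0 t₀ *ᵥ c))
  rw [hK.mulVec_eq_iff ht, sub_eq_iff_eq_add, hK.integral_mulVec_eq hg ht₀ ht,
    hK.flow t₀ ht₀ 0 h0 t ht, ← mulVec_mulVec, mulVec_add, add_right_comm]

theorem forward_iff (hK : IsFlowKernel T d K) (hT : 0 ≤ T) {g x M : ℝ → Vec d}
    (hg : ContinuousOn g (Icc 0 T)) (ξ : Vec d) :
    (∀ t ∈ Icc 0 T, x t = K t 0 *ᵥ ξ + M t + ∫ s in (0 : ℝ)..t, K t s *ᵥ g s) ↔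
      K 0 0 *ᵥ (x 0 - M 0) = ξ ∧
      ∀ t ∈ Icc 0 T,
        HasDerivWithinAt (fun t => K 0 t *ᵥ (x t - M t)) (K 0 t *ᵥ g t) (Icc 0 T) t := by
  have h0 : (0 : ℝ) ∈ Icc 0 T := left_mem_Icc.2 hT
  rw [hK.volterra_iff hg h0, hK.diag 0 h0, one_mulVec ξ]

theorem backward_iff (hK : IsFlowKernel T d K) (hT : 0 ≤ T) {g y : ℝ → Vec d}
    (hg : ContinuousOn g (Icc 0 T)) (w : Vec d) :
    (∀ t ∈ Icc 0 T, y t = (K T t)ᵀ *ᵥ w + ∫ s in t..T, (K s t)ᵀ *ᵥ g s) ↔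
      (K T 0)ᵀ *ᵥ y T = (K T 0)ᵀ *ᵥ w ∧
      ∀ t ∈ Icc 0 T,
        HasDerivWithinAt (fun t => (K t 0)ᵀ *ᵥ y t) (-((K t 0)ᵀ *ᵥ g t)) (Icc 0 T) t := by
  simpa [mulVec_neg, ← intervalIntegral.integral_symm] using
    hK.transpose_swap.volterra_iff (x := y) (M := 0) hg.neg (right_mem_Icc.2 hT) w

end IsFlowKernel

section VolterraHamiltonian

variable {T : ℝ} {d : ℕ} {K : ℝ → ℝ → Mat d} {A G H : ℝ → Mat d} {P : Mat d}
  {c h M x y : ℝ → Vec d} {ξ p : Vec d}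

/-- `(x, y)` is a pair of continuous solutions on `[0, T]` of the Volterra form of the Hamiltonian
boundary value problem: the forward–backward system in which the coefficients only enter through
`G = B R⁻¹ Bᵀ`, the weights `H`, `P` and the sources `c`, `h`, `p`. -/
structure SolvesVolterraHamiltonian (T : ℝ) {d : ℕ} (K : ℝ → ℝ → Mat d) (A G H : ℝ → Mat d)
    (P : Mat d) (c h M : ℝ → Vec d) (ξ p : Vec d) (x y : ℝ → Vec d) : Prop where
  continuousOn_state : ContinuousOn x (Icc 0 T)
  continuousOn_costate : ContinuousOn y (Icc 0 T)
  forward : ∀ t ∈ Icc 0 T, x t = K t 0 *ᵥ ξ + M t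
    + ∫ s in (0 : ℝ)..t, K t s *ᵥ (A s *ᵥ x s - G s *ᵥ y s + c s)
  backward : ∀ t ∈ Icc 0 T, y t = (K T t)ᵀ *ᵥ (P *ᵥ x T - p)
    + ∫ s in t..T, (K s t)ᵀ *ᵥ (H s *ᵥ x s - h s + (A s)ᵀ *ᵥ y s)

/-- State and costate transported back to time `0`, where `K 0 t` stands for `(K t 0)⁻¹`: the
coordinates in which the Volterra form of the Hamiltonian boundary value problem becomes an
ordinary one. -/
def flowCoord (K : ℝ → ℝ → Mat d) (M x y : ℝ → Vec d) (t : ℝ) : Vec d × Vec d :=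
  (K 0 t *ᵥ (x t - M t), (K t 0)ᵀ *ᵥ y t)

theorem IsFlowKernel.flowCoord_eq_iff (hK : IsFlowKernel T d K) {t : ℝ} (ht : t ∈ Icc 0 T)
    {z : Vec d × Vec d} :
    flowCoord K M x y t = z ↔ x t = K t 0 *ᵥ z.1 + M t ∧ y t = (K 0 t)ᵀ *ᵥ z.2 := by
  rw [Prod.ext_iff, ← sub_eq_iff_eq_add]
  exact and_congr (hK.mulVec_eq_iff ht) (hK.transpose_swap.mulVec_eq_iff ht)

/-- The system matrix of the boundary value problem solved by `flowCoord K M x y`. -/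
def flowGenerator (K : ℝ → ℝ → Mat d) (A G H : ℝ → Mat d) (t : ℝ) :
    Vec d × Vec d →L[ℝ] Vec d × Vec d :=
  hamiltonianCLM (K 0 t * A t * K t 0) (K 0 t * G t * (K 0 t)ᵀ) ((K t 0)ᵀ * H t * K t 0)

/-- The source term of the boundary value problem solved by `flowCoord K M x y`. -/
def flowSource (K : ℝ → ℝ → Mat d) (A H : ℝ → Mat d) (c h M : ℝ → Vec d) (t : ℝ) : Vec d × Vec d :=
  (K 0 t *ᵥ (A t *ᵥ M t + c t), (K t 0)ᵀ *ᵥ (h t - H t *ᵥ M t))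

theorem IsFlowKernel.flowGenerator_flowCoord_add_flowSource (hK : IsFlowKernel T d K) {t : ℝ}
    (ht : t ∈ Icc 0 T) :
    flowGenerator K A G H t (flowCoord K M x y t) + flowSource K A H c h M t =
      (K 0 t *ᵥ (A t *ᵥ x t - G t *ᵥ y t + c t),
        -((K t 0)ᵀ *ᵥ (H t *ᵥ x t - h t + (A t)ᵀ *ᵥ y t))) := by
  obtain ⟨hx, hy⟩ := (hK.flowCoord_eq_iff (M := M) (x := x) (y := y) ht).1 rfl
  generalize flowCoord K M x y t = z at hx hy ⊢
  simp only [flowGenerator, flowSource, hamiltonianCLM_apply, hx, hy, transpose_mul,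
    mulVec_add, mulVec_sub, mulVec_mulVec, Matrix.mul_assoc, Prod.mk_add_mk, Prod.mk.injEq]
  constructor <;> abel

theorem IsFlowKernel.boundary_flowCoord_iff (hK : IsFlowKernel T d K) (hT : 0 ≤ T) :
    hamiltonianBoundary ((K T 0)ᵀ * P * K T 0) (flowCoord K M x y 0, flowCoord K M x y T) =
        (ξ, (K T 0)ᵀ *ᵥ (P *ᵥ M T - p)) ↔
      K 0 0 *ᵥ (x 0 - M 0) = ξ ∧ (K T 0)ᵀ *ᵥ y T = (K T 0)ᵀ *ᵥ (P *ᵥ x T - p) := by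
  have hcancel : K T 0 *ᵥ (K 0 T *ᵥ (x T - M T)) = x T - M T :=
    ((hK.mulVec_eq_iff (right_mem_Icc.2 hT)).1 rfl).symm
  simp only [hamiltonianBoundary_apply, flowCoord, Prod.mk.injEq, sub_eq_iff_eq_add,
    ← mulVec_mulVec, hcancel, ← mulVec_add]
  rw [mulVec_sub P, sub_add_sub_cancel']

theorem IsFlowKernel.solvesLinearBVP_flowCoord_iff (hK : IsFlowKernel T d K) (hT : 0 ≤ T) :
    SolvesLinearBVP 0 T (flowGenerator K A G H) (flowSource K A H c h M)
        (hamiltonianBoundary ((K T 0)ᵀ * P * K T 0)) (ξ, (K T 0)ᵀ *ᵥ (P *ᵥ M T - p))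
        (flowCoord K M x y) ↔
      (K 0 0 *ᵥ (x 0 - M 0) = ξ ∧
        ∀ t ∈ Icc 0 T, HasDerivWithinAt (fun t => K 0 t *ᵥ (x t - M t))
          (K 0 t *ᵥ (A t *ᵥ x t - G t *ᵥ y t + c t)) (Icc 0 T) t) ∧
      (K T 0)ᵀ *ᵥ y T = (K T 0)ᵀ *ᵥ (P *ᵥ x T - p) ∧
        ∀ t ∈ Icc 0 T, HasDerivWithinAt (fun t => (K t 0)ᵀ *ᵥ y t)
          (-((K t 0)ᵀ *ᵥ (H t *ᵥ x t - h t + (A t)ᵀ *ᵥ y t))) (Icc 0 T) t := by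
  constructor
  · intro hz
    obtain ⟨h0, hT'⟩ := (hK.boundary_flowCoord_iff hT).1 hz.boundary
    have hderiv := fun t ht => hasDerivWithinAt_prod_iff.1 <|
      hK.flowGenerator_flowCoord_add_flowSource ht ▸ hz.deriv t ht
    exact ⟨⟨h0, fun t ht => (hderiv t ht).1⟩, hT', fun t ht => (hderiv t ht).2⟩
  · rintro ⟨⟨h0, hu⟩, hT', hv⟩
    refine ⟨fun t ht => ?_, (hK.boundary_flowCoord_iff hT).2 ⟨h0, hT'⟩⟩
    rw [hK.flowGenerator_flowCoord_add_flowSource ht]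
    exact (hu t ht).prodMk (hv t ht)

theorem IsFlowKernel.continuousOn_of_flowCoord (hK : IsFlowKernel T d K)
    (hM : ContinuousOn M (Icc 0 T)) (hz : ContinuousOn (flowCoord K M x y) (Icc 0 T)) :
    ContinuousOn x (Icc 0 T) ∧ ContinuousOn y (Icc 0 T) := by
  have hinv := hK.continuousOn_inverse
  have hcont := hK.cont
  have hxy := fun t ht => (hK.flowCoord_eq_iff (M := M) (x := x) (y := y) (t := t) ht).1 rfl
  generalize flowCoord K M x y = z at hz hxy
  exact ⟨ContinuousOn.congr (by fun_prop) fun t ht => (hxy t ht).1,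
    ContinuousOn.congr (by fun_prop) fun t ht => (hxy t ht).2⟩

theorem solvesVolterraHamiltonian_iff (hK : IsFlowKernel T d K) (hT : 0 ≤ T)
    (hA : ContinuousOn A (Icc 0 T)) (hG : ContinuousOn G (Icc 0 T)) (hH : ContinuousOn H (Icc 0 T))
    (hc : ContinuousOn c (Icc 0 T)) (hh : ContinuousOn h (Icc 0 T))
    (hM : ContinuousOn M (Icc 0 T)) :
    SolvesVolterraHamiltonian T K A G H P c h M ξ p x y ↔
      SolvesLinearBVP 0 T (flowGenerator K A G H) (flowSource K A H c h M)
        (hamiltonianBoundary ((K T 0)ᵀ * P * K T 0)) (ξ, (K T 0)ᵀ *ᵥ (P *ᵥ M T - p))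
        (flowCoord K M x y) := by
  constructor
  · rintro ⟨hx, hy, hforward, hbackward⟩
    exact (hK.solvesLinearBVP_flowCoord_iff hT).2
      ⟨(hK.forward_iff hT (by fun_prop) ξ).1 hforward,
        (hK.backward_iff hT (by fun_prop) _).1 hbackward⟩
  · intro hz
    obtain ⟨hx, hy⟩ := hK.continuousOn_of_flowCoord hM (HasDerivWithinAt.continuousOn hz.deriv)
    obtain ⟨hu, hv⟩ := (hK.solvesLinearBVP_flowCoord_iff hT).1 hz
    exact ⟨hx, hy, (hK.forward_iff hT (by fun_prop) ξ).2 hu,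
      (hK.backward_iff hT (by fun_prop) _).2 hv⟩

theorem exists_unique_solvesVolterraHamiltonian (hK : IsFlowKernel T d K) (hT : 0 < T)
    (hA : ContinuousOn A (Icc 0 T)) (hG : ContinuousOn G (Icc 0 T)) (hH : ContinuousOn H (Icc 0 T))
    (hc : ContinuousOn c (Icc 0 T)) (hh : ContinuousOn h (Icc 0 T)) (hM : ContinuousOn M (Icc 0 T))
    (hGpos : ∀ t ∈ Icc 0 T, (G t).PosSemidef) (hHpos : ∀ t ∈ Icc 0 T, (H t).PosSemidef)
    (hPpos : P.PosSemidef) (ξ p : Vec d) :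
    ∃ x y : ℝ → Vec d, SolvesVolterraHamiltonian T K A G H P c h M ξ p x y ∧
      ∀ x₂ y₂ : ℝ → Vec d, SolvesVolterraHamiltonian T K A G H P c h M ξ p x₂ y₂ →
        ∀ t ∈ Icc 0 T, x₂ t = x t ∧ y₂ t = y t := by
  have hinv := hK.continuousOn_inverse
  have hcont := hK.cont
  have hiff := fun x y => solvesVolterraHamiltonian_iff (P := P) (x := x) (y := y) (ξ := ξ) (p := p)
    hK hT.le hA hG hH hc hh hM
  have hhom : ∀ z, SolvesLinearBVP 0 T (flowGenerator K A G H) 0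
      (hamiltonianBoundary ((K T 0)ᵀ * P * K T 0)) 0 z → EqOn z 0 (Icc 0 T) := fun z hz =>
    eqOn_zero_of_solvesLinearBVP_hamiltonian hT (by fun_prop)
      (fun t ht => by simpa using posSemidef_transpose_mul_mul (hGpos t ht) (K 0 t)ᵀ)
      (fun t ht => posSemidef_transpose_mul_mul (hHpos t ht) _)
      (posSemidef_transpose_mul_mul hPpos _) hz
  obtain ⟨z, hz⟩ := exists_solvesLinearBVP hT.le rfl
    (continuousOn_hamiltonianCLM (by fun_prop) (by fun_prop) (by fun_prop)) hhom
    (f := flowSource K A H c h M) (by unfold flowSource; fun_prop)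
    (ξ, (K T 0)ᵀ *ᵥ (P *ᵥ M T - p))
  refine ⟨fun t => K t 0 *ᵥ (z t).1 + M t, fun t => (K 0 t)ᵀ *ᵥ (z t).2,
    (hiff _ _).2 (hz.congr hT.le fun t ht => (hK.flowCoord_eq_iff ht).2 ⟨rfl, rfl⟩),
    fun x₂ y₂ h₂ t ht => ?_⟩
  exact (hK.flowCoord_eq_iff ht).1 (((hiff x₂ y₂).1 h₂).eqOn hhom hz ht)

end VolterraHamiltonian

section LinearQuadratic

variable {T : ℝ} {d κ : ℕ} {K : ℝ → ℝ → Mat d} {A C : ℝ → Mat d}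
  {B : ℝ → Matrix (Fin d) (Fin κ) ℝ} {R : ℝ → Matrix (Fin κ) (Fin κ) ℝ} {Qt Qbt St : ℝ → Mat d}
  {Q Qb : Mat d} {m M : ℝ → Vec d}

theorem solvesFB_iff_solvesVolterraHamiltonian {S : Mat d} {ξ : Vec d} {x y : ℝ → Vec d} :
    SolvesFB T K A C B R Qt Qbt St Q Qb S ξ m M x y ↔
      SolvesVolterraHamiltonian T K A (fun t => B t * (R t)⁻¹ * (B t)ᵀ) (fun t => Qt t + Qbt t)
        (Q + Qb) (fun t => C t *ᵥ m t) (fun t => Qbt t *ᵥ (St t *ᵥ m t)) M ξ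
        (Qb *ᵥ (S *ᵥ m T)) x y := by
  constructor
  · rintro ⟨hx, hy, hforward, hbackward⟩
    exact ⟨hx, hy, by simpa only [← mulVec_mulVec] using hforward, hbackward⟩
  · rintro ⟨hx, hy, hforward, hbackward⟩
    exact ⟨hx, hy, by simpa only [← mulVec_mulVec] using hforward, hbackward⟩

theorem fb_volterra_existence_uniqueness_general (hK : IsFlowKernel T d K) (hT : 0 < T)
    (hA : ContinuousOn A (Icc 0 T)) (hC : ContinuousOn C (Icc 0 T)) (hB : ContinuousOn B (Icc 0 T))
    (hR : ContinuousOn R (Icc 0 T)) (hQt : ContinuousOn Qt (Icc 0 T))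
    (hQbt : ContinuousOn Qbt (Icc 0 T)) (hSt : ContinuousOn St (Icc 0 T))
    (hRpos : ∀ t ∈ Icc 0 T, (R t).PosDef)
    (hQtpos : ∀ t ∈ Icc 0 T, (Qt t + Qbt t).PosSemidef) (hQpos : (Q + Qb).PosSemidef) (S : Mat d)
    (ξ : Vec d) (hm : ContinuousOn m (Icc 0 T)) (hM : ContinuousOn M (Icc 0 T)) :
    ∃ x y : ℝ → Vec d, SolvesFB T K A C B R Qt Qbt St Q Qb S ξ m M x y ∧
      ∀ x₂ y₂ : ℝ → Vec d, SolvesFB T K A C B R Qt Qbt St Q Qb S ξ m M x₂ y₂ →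
        ∀ t ∈ Icc 0 T, x₂ t = x t ∧ y₂ t = y t := by
  have hRinv : ContinuousOn (fun t => (R t)⁻¹) (Icc 0 T) :=
    continuousOn_matrix_inv hR fun t ht => (hRpos t ht).isUnit
  have hGpos : ∀ t ∈ Icc 0 T, (B t * (R t)⁻¹ * (B t)ᵀ).PosSemidef := fun t ht => by
    simpa using posSemidef_transpose_mul_mul (hRpos t ht).inv.posSemidef (B t)ᵀ
  simp only [solvesFB_iff_solvesVolterraHamiltonian]
  exact exists_unique_solvesVolterraHamiltonian hK hT hA (by fun_prop) (by fun_prop) (by fun_prop)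
    (by fun_prop) hM hGpos hQtpos hQpos ξ _

end LinearQuadratic

/-- under the LQ assumptions, for every `ξ` and continuous paths `m, M`, the
deterministic forward–backward Volterra system has exactly one pair of continuous solutions
on `[0,T]`. -/
theorem fb_volterra_existence_uniqueness
    (T : ℝ) (hT : 0 < T) (d κ : ℕ)
    (K : ℝ → ℝ → Mat d) (hK : IsFlowKernel T d K)
    (A C : ℝ → Mat d) (B : ℝ → Matrix (Fin d) (Fin κ) ℝ)
    (R : ℝ → Matrix (Fin κ) (Fin κ) ℝ) (Qt Qbt St : ℝ → Mat d)
    (Q Qb S : Mat d) (lam : ℝ) (hlam : 0 < lam)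
    (hA : ContinuousOn A (Icc (0:ℝ) T)) (hC : ContinuousOn C (Icc (0:ℝ) T))
    (hB : ContinuousOn B (Icc (0:ℝ) T)) (hR : ContinuousOn R (Icc (0:ℝ) T))
    (hQt : ContinuousOn Qt (Icc (0:ℝ) T)) (hQbt : ContinuousOn Qbt (Icc (0:ℝ) T))
    (hSt : ContinuousOn St (Icc (0:ℝ) T))
    (hRpos : ∀ t ∈ Icc (0:ℝ) T, (R t - lam • (1 : Matrix (Fin κ) (Fin κ) ℝ)).PosSemidef)
    (hQtpos : ∀ t ∈ Icc (0:ℝ) T, (Qt t).PosSemidef)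
    (hQbtpos : ∀ t ∈ Icc (0:ℝ) T, (Qbt t).PosSemidef)
    (hQpos : Q.PosSemidef) (hQbpos : Qb.PosSemidef)
    (ξ : Vec d) (m M : ℝ → Vec d)
    (hm : ContinuousOn m (Icc (0:ℝ) T)) (hM : ContinuousOn M (Icc (0:ℝ) T)) :
    ∃ x y : ℝ → Vec d,
      SolvesFB T K A C B R Qt Qbt St Q Qb S ξ m M x y ∧
      ∀ x₂ y₂ : ℝ → Vec d,
        SolvesFB T K A C B R Qt Qbt St Q Qb S ξ m M x₂ y₂ →
        ∀ t ∈ Icc (0:ℝ) T, x₂ t = x t ∧ y₂ t = y t :=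
  fb_volterra_existence_uniqueness_general hK hT hA hC hB hR hQt hQbt hSt
    (fun t ht => posDef_of_posSemidef_sub_smul_one hlam (hRpos t ht))
    (fun t ht => (hQtpos t ht).add (hQbtpos t ht)) (hQpos.add hQbpos) S ξ hm hM
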